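/- For every k ≥ 6 and every n ≥ (k − 1)·2^{k−4}, there exists an n-vertex rainbow P_k-saturated graph with exactly n + (k − 5)·2^{k−5} edges. Consequently, for such k and n, the minimum number of edges in an n-vertex rainbow P_k-saturated graph is at most n + (k − 5)·2^{k−5}. -/

import Mathlib

open SimpleGraph

/-- A proper edge-coloring of `G`: distinct edges sharing a vertex get distinct colors. -/
def IsProperEdgeColoring {V : Type} (G : SimpleGraph V) (c : Sym2 V → ℕ) : Prop :=
  ∀ e₁ ∈ G.edgeSet, ∀ e₂ ∈ G.edgeSet, e₁ ≠ e₂ → (∃ v, v ∈ e₁ ∧ v ∈ e₂) → c e₁ ≠ c e₂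

/-- `G` contains a rainbow copy of `H` under the edge-coloring `c`. -/
def HasRainbowCopy {V W : Type} (G : SimpleGraph V) (H : SimpleGraph W)
    (c : Sym2 V → ℕ) : Prop :=
  ∃ f : W → V, Function.Injective f ∧ (∀ a b, H.Adj a b → G.Adj (f a) (f b)) ∧
    ∀ e₁ ∈ H.edgeSet, ∀ e₂ ∈ H.edgeSet, e₁ ≠ e₂ → c (Sym2.map f e₁) ≠ c (Sym2.map f e₂)

/-- `G` is (properly) rainbow `H`-saturated. -/
def IsRainbowSat {V W : Type} (G : SimpleGraph V) (H : SimpleGraph W) : Prop :=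
  (∃ c : Sym2 V → ℕ, IsProperEdgeColoring G c ∧ ¬ HasRainbowCopy G H c) ∧
  ∀ u v : V, u ≠ v → ¬ G.Adj u v →
    ∀ c : Sym2 V → ℕ,
      IsProperEdgeColoring (G ⊔ SimpleGraph.fromEdgeSet {s(u, v)}) c →
      HasRainbowCopy (G ⊔ SimpleGraph.fromEdgeSet {s(u, v)}) H c

/-!
Take disjoint cliques of order `s`, join each of them completely to its own independent set of rim
vertices, and hang leaves from rim vertices. Every edge contains a clique vertex or a leaf, so a
path has at most `2 * s + 2` edges, and at most `2 * s + 1` if each component has its leaves at a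
single rim vertex; any injective edge coloring is then free of rainbow copies of the path with one
more edge. A new edge creates a rainbow path with three edges meeting some clique in its first
vertex only, or it joins two leafless rim vertices of the same clique. Either way one obtains a
rainbow path of the required length greedily, alternating between the clique and its many rim
vertices. The numbers of cliques and rim vertices are chosen to hit the prescribed edge count. For
`k = 6` the graph is `K₄` with leaves, where the coloring by `a ^^^ b` gives opposite edges of `K₄`
the same color.
-/

/-! ### Rainbow paths -/

section RainbowPaths

variable {V : Type} {G : SimpleGraph V} {c : Sym2 V → ℕ}

theorem IsProperEdgeColoring.ne (hc : IsProperEdgeColoring G c) {a b b' : V} (hb : G.Adj a b)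
    (hb' : G.Adj a b') (hne : b ≠ b') : c s(a, b) ≠ c s(a, b') :=
  hc _ hb _ hb' (fun h => hne (Sym2.congr_right.1 h)) ⟨a, by simp, by simp⟩

/-- A path all of whose edges have distinct colors. Copies of `pathGraph (n + 1)` that are rainbow
correspond to such walks of length `n`, see `hasRainbowCopy_pathGraph_iff`. -/
def IsRainbowPath (c : Sym2 V → ℕ) {u v : V} (p : G.Walk u v) : Prop :=
  p.IsPath ∧ (p.edges.map c).Nodup

theorem map_pathGraphCopy_mem_edges [DecidableEq V] {u v : V} {p : G.Walk u v} (hp : p.IsPath) :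
    ∀ e ∈ (pathGraph (p.length + 1)).edgeSet, Sym2.map hp.pathGraphCopy e ∈ p.edges := by
  refine Sym2.ind fun a b hab => ?_
  exact p.mem_edges_toSubgraph.1 (p.pathGraphHomToSubgraph.map_adj hab)

theorem exists_isPath_pathGraph {n : ℕ} (j : Fin (n + 1)) :
    ∃ p : (pathGraph (n + 1)).Walk j 0, p.IsPath ∧ p.length = j ∧ ∀ i ∈ p.support, i ≤ j := by
  induction j using Fin.induction with
  | zero => exact ⟨.nil, by simp⟩
  | succ j ih =>
    obtain ⟨p, hp, hlen, hle⟩ := ih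
    have hadj : (pathGraph (n + 1)).Adj j.succ j.castSucc := pathGraph_adj.2 (.inr (by simp))
    refine ⟨.cons hadj p, hp.cons fun h => ?_, by simp [hlen], ?_⟩
    · exact absurd (hle _ h) (by simp)
    · simpa using fun i hi => (hle i hi).trans j.castSucc_lt_succ.le

theorem hasRainbowCopy_pathGraph_iff {n : ℕ} : HasRainbowCopy G (pathGraph (n + 1)) c ↔
    ∃ (u v : V) (p : G.Walk u v), IsRainbowPath c p ∧ p.length = n := by
  classical
  constructor
  · rintro ⟨f, hf, hadj, hcol⟩
    obtain ⟨p, hp, hlen, -⟩ := exists_isPath_pathGraph (Fin.last n)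
    let φ : pathGraph (n + 1) →g G := ⟨f, hadj _ _⟩
    refine ⟨_, _, p.map φ, ⟨hp.map hf, ?_⟩, by simpa using hlen⟩
    rw [Walk.edges_map, List.map_map]
    exact hp.isTrail.edges_nodup.map_on fun e he e' he' h => by_contra fun hne =>
      hcol e (p.edges_subset_edgeSet he) e' (p.edges_subset_edgeSet he') hne h
  · rintro ⟨u, v, p, ⟨hp, hcol⟩, rfl⟩
    refine ⟨hp.pathGraphCopy, hp.pathGraphCopy.injective,
      fun a b => hp.pathGraphCopy.toHom.map_adj, fun e he e' he' hne h => hne ?_⟩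
    refine Sym2.map.injective hp.pathGraphCopy.injective ?_
    exact List.inj_on_of_nodup_map hcol (map_pathGraphCopy_mem_edges hp e he)
      (map_pathGraphCopy_mem_edges hp e' he') h

theorem IsProperEdgeColoring.exists_color_notMem (hc : IsProperEdgeColoring G c) {a : V}
    {C : Finset V} (hC : ∀ b ∈ C, G.Adj a b) {U : Finset ℕ} (hU : U.card < C.card) :
    ∃ b ∈ C, c s(a, b) ∉ U := by
  by_contra! h
  refine hU.not_ge (Finset.card_le_card_of_injOn (fun b => c s(a, b)) h fun b hb b' hb' heq => ?_)
  exact by_contra fun hne => hc.ne (hC b hb) (hC b' hb') hne heq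

theorem IsProperEdgeColoring.exists_color_notMem₂ (hc : IsProperEdgeColoring G c) {a a' : V}
    {C : Finset V} (hC : ∀ b ∈ C, G.Adj a b) (hC' : ∀ b ∈ C, G.Adj a' b) {U U' : Finset ℕ}
    (hU : U.card + U'.card < C.card) : ∃ b ∈ C, c s(a, b) ∉ U ∧ c s(a', b) ∉ U' := by
  classical
  have hsplit := C.card_filter_add_card_filter_not (fun b => c s(a, b) ∈ U)
  have hle : {b ∈ C | c s(a, b) ∈ U}.card ≤ U.card := not_lt.1 fun hlt => by
    obtain ⟨b, hb, hbU⟩ := hc.exists_color_notMem (fun b hb => hC b (Finset.mem_filter.1 hb).1) hlt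
    exact hbU (Finset.mem_filter.1 hb).2
  obtain ⟨b, hb, hbU'⟩ := hc.exists_color_notMem (C := {b ∈ C | c s(a, b) ∉ U}) (U := U')
    (fun b hb => hC' b (Finset.mem_filter.1 hb).1) (by omega)
  exact ⟨b, (Finset.mem_filter.1 hb).1, (Finset.mem_filter.1 hb).2, hbU'⟩

namespace IsRainbowPath

theorem hasRainbowCopy {u v : V} {p : G.Walk u v} (hp : IsRainbowPath c p) {k : ℕ}
    (hk : p.length + 1 = k) : HasRainbowCopy G (pathGraph k) c :=
  hk ▸ hasRainbowCopy_pathGraph_iff.2 ⟨u, v, p, hp, rfl⟩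

theorem cons (hc : IsProperEdgeColoring G c) {a b v : V} {p : G.Walk a v}
    (hp : IsRainbowPath c p) (h : G.Adj b a) (hb : b ∉ p.support)
    (hcol : c s(b, a) ∉ p.edges.tail.map c) : IsRainbowPath c (p.cons h) := by
  refine ⟨hp.1.cons hb, List.nodup_cons.2 ⟨(?_ : c s(b, a) ∉ p.edges.map c), hp.2⟩⟩
  cases p with
  | nil => simp
  | @cons _ x _ hax q =>
    have hbx : b ≠ x := by rintro rfl; simp at hb
    have hne : c s(b, a) ≠ c s(a, x) := by
      rw [Sym2.eq_swap]; exact hc.ne h.symm hax hbx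
    rw [Walk.edges_cons, List.map_cons, List.mem_cons, not_or]
    exact ⟨hne, hcol⟩

theorem nil (u : V) : IsRainbowPath c (Walk.nil : G.Walk u u) :=
  ⟨.nil, by simp⟩

theorem exists_cons (hc : IsProperEdgeColoring G c) {a v : V} {p : G.Walk a v}
    (hp : IsRainbowPath c p) {C : Finset V} (hC : ∀ b ∈ C, G.Adj b a)
    (hpC : ∀ b ∈ C, b ∉ p.support) (hcard : p.length - 1 < C.card) :
    ∃ b ∈ C, ∃ h : G.Adj b a, IsRainbowPath c (p.cons h) := by
  obtain ⟨b, hb, hcol⟩ := hc.exists_color_notMem (fun b hb => (hC b hb).symm)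
    (U := (p.edges.tail.map c).toFinset)
    ((List.toFinset_card_le _).trans_lt (by simpa using hcard))
  exact ⟨b, hb, hC b hb, hp.cons hc (hC b hb) (hpC b hb)
    (by rwa [Sym2.eq_swap, ← List.mem_toFinset])⟩

theorem reverse {u v : V} {p : G.Walk u v} (hp : IsRainbowPath c p) :
    IsRainbowPath c p.reverse :=
  ⟨hp.1.reverse, by
    simpa only [Walk.edges_reverse, List.map_reverse, List.nodup_reverse] using hp.2⟩

theorem hasRainbowCopy_length_add_three (hc : IsProperEdgeColoring G c) {u v : V}
    {p : G.Walk u v} (hp : IsRainbowPath c p) {C C' : Finset V}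
    (hC : ∀ b ∈ C, G.Adj b u ∧ b ∉ p.support) (hC' : ∀ b ∈ C', G.Adj b v ∧ b ∉ p.support)
    (hdisj : Disjoint C C') (hcard : p.length - 1 < C.card)
    (hcard' : p.length < C'.card) : HasRainbowCopy G (pathGraph (p.length + 3)) c := by
  obtain ⟨b, hb, h, hbp⟩ := hp.exists_cons hc (fun b hb => (hC b hb).1) (fun b hb => (hC b hb).2)
    hcard
  have hC'b : ∀ b' ∈ C', b' ∉ (p.cons h).reverse.support := fun b' hb' => by
    have hne : b' ≠ b := fun h => Finset.disjoint_left.1 hdisj hb (h ▸ hb')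
    rw [Walk.support_reverse, List.mem_reverse, Walk.support_cons, List.mem_cons, not_or]
    exact ⟨hne, (hC' b' hb').2⟩
  obtain ⟨b', -, h', hbpb'⟩ := hbp.reverse.exists_cons hc (fun b' hb' => (hC' b' hb').1) hC'b
    (by simpa using hcard')
  exact hbpb'.hasRainbowCopy (by simp)

theorem exists_cons_cons (hc : IsProperEdgeColoring G c) {a a' v : V} {p : G.Walk a v}
    (hp : IsRainbowPath c p) (ha' : a' ∉ p.support) {C : Finset V} (hC : ∀ b ∈ C, G.Adj b a)
    (hC' : ∀ b ∈ C, G.Adj b a') (hpC : ∀ b ∈ C, b ∉ p.support) {U : Finset ℕ}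
    (hpU : ∀ e ∈ p.edges, c e ∉ U) (hcard : (p.length - 1) + p.length + 2 * U.card < C.card) :
    ∃ b ∈ C, ∃ q : G.Walk a' v, IsRainbowPath c q ∧ q.length = p.length + 2 ∧
      q.support = a' :: b :: p.support ∧ (∀ e ∈ q.edges, c e ∉ U) ∧
      ∃ C' ⊆ C, C'.card + 1 = C.card ∧ ∀ x ∈ C', x ∉ q.support := by
  classical
  have hlen : (U ∪ (p.edges.tail.map c).toFinset).card + (U ∪ (p.edges.map c).toFinset).card
      < C.card := by
    have h₁ := (p.edges.tail.map c).toFinset_card_le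
    have h₂ := (p.edges.map c).toFinset_card_le
    have h₃ := Finset.card_union_le U (p.edges.tail.map c).toFinset
    have h₄ := Finset.card_union_le U (p.edges.map c).toFinset
    simp only [List.length_map, List.length_tail, Walk.length_edges] at h₁ h₂
    omega
  obtain ⟨b, hb, hcol, hcol'⟩ := hc.exists_color_notMem₂ (fun b hb => (hC b hb).symm)
    (fun b hb => (hC' b hb).symm) hlen
  simp only [Finset.mem_union, List.mem_toFinset, not_or] at hcol hcol'
  rw [Sym2.eq_swap] at hcol
  have hab := hp.cons hc (hC b hb) (hpC b hb) hcol.2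
  have ha'b : a' ∉ (Walk.cons (hC b hb) p).support := by
    rw [Walk.support_cons, List.mem_cons, not_or]
    exact ⟨(hC' b hb).ne', ha'⟩
  refine ⟨b, hb, _, hab.cons hc (hC' b hb).symm ha'b hcol'.2, rfl, rfl, ?_,
    C.erase b, C.erase_subset b, Finset.card_erase_add_one hb, fun x hx => ?_⟩
  · simpa only [Walk.edges_cons, List.forall_mem_cons] using ⟨hcol'.1, hcol.1, hpU⟩
  · obtain ⟨hxb, hxC⟩ := Finset.mem_erase.1 hx
    simp [hxb, (hC' x hxC).ne, hpC x hxC]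

/-- A rainbow path can be prolonged so as to alternate between `C` and all vertices of `A`, ending
at the prescribed vertex `z`. -/
theorem exists_sweep (hc : IsProperEdgeColoring G c) {a v z : V} {p : G.Walk a v}
    (hp : IsRainbowPath c p) (hpos : 0 < p.length) {A C : Finset V} (hzA : z ∉ A)
    (hAp : ∀ x, x = z ∨ x ∈ A → x ∉ p.support) (hCp : ∀ b ∈ C, b ∉ p.support)
    (haC : ∀ b ∈ C, G.Adj b a) (hAC : ∀ x, x = z ∨ x ∈ A → ∀ b ∈ C, G.Adj b x)
    {U : Finset ℕ} (hpU : ∀ e ∈ p.edges, c e ∉ U)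
    (hcard : 2 * p.length + 2 * U.card + 5 * A.card ≤ C.card) :
    ∃ q : G.Walk z v, IsRainbowPath c q ∧ q.length = p.length + 2 * (A.card + 1) ∧
      (∀ x ∈ q.support, x ∈ p.support ∨ x = z ∨ x ∈ A ∨ x ∈ C) ∧ (∀ e ∈ q.edges, c e ∉ U) ∧
      ∃ C' ⊆ C, C'.card + A.card + 1 = C.card ∧ ∀ b ∈ C', b ∉ q.support := by
  classical
  induction A using Finset.induction_on generalizing a p C with
  | empty =>
    obtain ⟨b, hb, q, hq, hlen, hsupp, hqU, C', hC', hC'card, hC'q⟩ := hp.exists_cons_cons hc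
      (hAp z (.inl rfl)) haC (hAC z (.inl rfl)) hCp hpU (by omega)
    exact ⟨q, hq, hlen, by grind, hqU, C', hC', hC'card, hC'q⟩
  | insert y A hyA ih =>
    have hy : y = z ∨ y ∈ insert y A := .inr (Finset.mem_insert_self y A)
    have hA {x : V} (hx : x = z ∨ x ∈ A) : x = z ∨ x ∈ insert y A :=
      hx.imp_right Finset.mem_insert_of_mem
    rw [Finset.card_insert_of_notMem hyA] at hcard ⊢
    obtain ⟨b, hb, q, hq, hlen, hsupp, hqU, C₁, hC₁, hC₁card, hC₁q⟩ := hp.exists_cons_cons hc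
      (hAp y hy) haC (hAC y hy) hCp hpU (by omega)
    have hAq : ∀ x, x = z ∨ x ∈ A → x ∉ q.support := fun x hx => by
      have hxy : x ≠ y := by grind
      simp [hsupp, hxy, (hAC x (hA hx) b hb).ne', hAp x (hA hx)]
    obtain ⟨r, hr, hrlen, hrsupp, hrU, C', hC', hC'card, hC'r⟩ := ih hq (by omega) (by grind) hAq
      hC₁q (fun x hx => hAC y hy x (hC₁ hx)) (fun x hx w hw => hAC x (hA hx) w (hC₁ hw)) hqU
      (by omega)
    exact ⟨r, hr, by omega, by grind, hrU, C', hC'.trans hC₁, by omega, hC'r⟩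

end IsRainbowPath
end RainbowPaths

section CompletePairs

variable {V : Type} {G : SimpleGraph V} {c : Sym2 V → ℕ}

theorem IsRainbowPath.cons_cons_nil (hc : IsProperEdgeColoring G c) {x y z : V} (hxy : G.Adj x y)
    (hyz : G.Adj y z) (hxz : x ≠ z) : IsRainbowPath c (.cons hxy (.cons hyz .nil)) :=
  ((IsRainbowPath.nil z).cons hc hyz (by simp [hyz.ne]) (by simp)).cons hc hxy
    (by simp [hxy.ne, hxz]) (by simp)

/-- `A` has an escape if some rainbow path with three edges meets `A` in its first vertex only. -/
def HasEscape (G : SimpleGraph V) (c : Sym2 V → ℕ) (A : Finset V) : Prop :=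
  ∃ a ∈ A, ∃ (v : V) (p : G.Walk a v), IsRainbowPath c p ∧ p.length = 3 ∧
    ∀ x ∈ p.support, x ∈ A → x = a

namespace HasEscape

theorem of_forall_adj (hc : IsProperEdgeColoring G c) {A : Finset V} (hA : 2 ≤ A.card) {b y z : V}
    (hb : ∀ a ∈ A, G.Adj a b) (hby : G.Adj b y) (hyz : G.Adj y z) (hbz : b ≠ z) (hy : y ∉ A)
    (hz : z ∉ A) : HasEscape G c A := by
  have hbA : b ∉ A := fun h => (hb b h).ne rfl
  have hsupp : ∀ a ∈ A, a ∉ [b, y, z] := by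
    simp only [List.mem_cons, List.not_mem_nil]
    grind
  obtain ⟨a, ha, h, hp⟩ := (IsRainbowPath.cons_cons_nil hc hby hyz hbz).exists_cons hc hb hsupp
    (by simp; omega)
  refine ⟨a, ha, z, _, hp, rfl, fun x hx hxA => ?_⟩
  exact (List.mem_cons.1 hx).resolve_right (hsupp x hxA)

theorem of_forall_adj_end (hc : IsProperEdgeColoring G c) {A C : Finset V} {a y z : V}
    (ha : a ∈ A) (hay : G.Adj a y) (hyz : G.Adj y z) (hy : y ∉ A) (hz : z ∉ A)
    (hC : ∀ x ∈ C, G.Adj z x) (hCA : ∀ x ∈ C, x ∉ A) (hyC : y ∉ C) (hcard : 2 ≤ C.card) :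
    HasEscape G c A := by
  obtain ⟨x, hx, hcol⟩ := hc.exists_color_notMem hC (U := {c s(a, y)}) (by simp; omega)
  have hxA := hCA x hx
  have hyx : y ≠ x := fun h => hyC (h ▸ hx)
  have haz : a ≠ z := fun h => hz (h ▸ ha)
  have hax : a ≠ x := fun h => hxA (h ▸ ha)
  refine ⟨a, ha, x, _, (IsRainbowPath.cons_cons_nil hc hyz (hC x hx) hyx).cons hc hay
    (by simp [hay.ne, haz, hax]) (by simpa [eq_comm] using hcol), rfl, ?_⟩
  simp only [Walk.support_cons, Walk.support_nil, List.mem_cons, List.not_mem_nil]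
  grind

end HasEscape

variable {A B : Finset V}

theorem exists_subset_card_add_two {a z : V} (ha : a ∈ A) (hz : z ∈ A) (hza : z ≠ a) :
    ∃ A' ⊆ A, A'.card + 2 = A.card ∧ z ∉ A' ∧ a ∉ A' := by
  classical
  have h₁ := Finset.card_erase_add_one ha
  have h₂ := Finset.card_erase_add_one (Finset.mem_erase.2 ⟨hza, hz⟩)
  exact ⟨(A.erase a).erase z, by grind, by omega, by simp, by simp⟩

theorem exists_subset_forall_notMem (B : Finset V) (l : List V) :
    ∃ C ⊆ B, (∀ x ∈ C, x ∉ l) ∧ B.card ≤ C.card + l.length := by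
  classical
  refine ⟨B \ l.toFinset, Finset.sdiff_subset, fun x hx => ?_, ?_⟩
  · simpa using (Finset.mem_sdiff.1 hx).2
  · have h₁ := Finset.le_card_sdiff l.toFinset B
    have h₂ := l.toFinset_card_le
    omega

theorem HasEscape.hasRainbowCopy_two_mul_card_add_three (hc : IsProperEdgeColoring G c)
    (hAB : ∀ a ∈ A, ∀ b ∈ B, G.Adj b a) (hA : 2 ≤ A.card) (hB : 5 * A.card ≤ B.card + 1)
    (h : HasEscape G c A) : HasRainbowCopy G (pathGraph (2 * A.card + 3)) c := by
  classical
  obtain ⟨a, ha, v, p, hp, hlen, hpA⟩ := h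
  obtain ⟨z, hz, hza⟩ := A.exists_mem_ne hA a
  obtain ⟨A', hA', hA'card, hzA', haA'⟩ := exists_subset_card_add_two ha hz hza
  have haB : a ∉ B := fun h => (hAB a ha a h).ne rfl
  obtain ⟨C, hCB, hC, hCcard⟩ := exists_subset_forall_notMem B p.support.tail
  rw [List.length_tail, Walk.length_support, hlen] at hCcard
  have hCp : ∀ b ∈ C, b ∉ p.support := fun b hb => by
    rw [Walk.mem_support_iff]
    grind
  have hCA : ∀ x ∈ A, ∀ b ∈ C, G.Adj b x := fun x hx b hb => hAB x hx b (hCB hb)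
  obtain ⟨q, hq, hqlen, -, -, C', hC', hC'card, hC'q⟩ := hp.exists_sweep hc (by omega) hzA'
    (by grind) hCp (hCA a ha) (by grind) (U := ∅) (by simp) (by simp; omega)
  obtain ⟨b, -, hbz, hqb⟩ := hq.exists_cons hc (fun b hb => hCA z hz b (hC' hb)) hC'q (by omega)
  exact hqb.hasRainbowCopy (by rw [Walk.length_cons]; omega)

theorem IsRainbowPath.hasRainbowCopy_two_mul_card_add_four (hc : IsProperEdgeColoring G c)
    (hAB : ∀ a ∈ A, ∀ b ∈ B, G.Adj b a) (hB : 5 * A.card + 4 ≤ B.card) {a v : V}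
    {p : G.Walk a v} (hp : IsRainbowPath c p) (hlen : p.length = 3) (ha : a ∈ A)
    (hpA : ∀ x ∈ p.support, x ∈ A → x = a) {z : V} (hz : z ∈ A) (hza : z ≠ a) {b l : V}
    (hb : b ∈ B) (hbp : b ∉ p.support) (hl : l ∉ p.support ∧ l ∉ A ∧ l ∉ B) (hbl : G.Adj b l)
    (hcols : ∀ e ∈ p.edges, c e ≠ c s(b, z) ∧ c e ≠ c s(b, l)) :
    HasRainbowCopy G (pathGraph (2 * A.card + 4)) c := by
  obtain ⟨A', hA', hA'card, hzA', haA'⟩ := exists_subset_card_add_two ha hz hza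
  obtain ⟨C, hCB, hC, hCcard⟩ := exists_subset_forall_notMem B (b :: p.support.tail)
  rw [List.length_cons, List.length_tail, Walk.length_support, hlen] at hCcard
  have hCA : ∀ x ∈ A, ∀ b ∈ C, G.Adj b x := fun x hx b hb => hAB x hx b (hCB hb)
  have hCp : ∀ x ∈ C, x ∉ p.support := fun x hx => by
    rw [Walk.mem_support_iff]
    have := (hCA a ha x hx).ne
    grind
  obtain ⟨q, hq, hqlen, hqsupp, hqU, -⟩ := hp.exists_sweep hc (by omega) hzA' (by grind) hCp
    (hCA a ha) (by grind) (U := {c s(b, z), c s(b, l)}) (by simpa using hcols) (by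
      have := Finset.card_le_two (a := c s(b, z)) (b := c s(b, l))
      omega)
  have hbA : b ∉ A := fun h => (hAB b h b hb).ne rfl
  have hbq : b ∉ q.support := by grind
  have hlq : l ∉ q.support := by grind
  have hqb := hq.cons hc (hAB z hz b hb) hbq (fun h => by
    obtain ⟨e, he, hce⟩ := List.mem_map.1 h
    exact hqU e (List.mem_of_mem_tail he) (by simp [hce]))
  refine (hqb.cons hc hbl.symm (by simp [hbl.ne', hlq]) fun h => ?_).hasRainbowCopy ?_
  · obtain ⟨e, he, hce⟩ := List.mem_map.1 h
    exact hqU e he (by simp [hce, Sym2.eq_swap])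
  · simp only [Walk.length_cons]
    omega

/-- The map `π` sends `b ∈ R` and all of `N b` to `b`, so that each vertex of the escaping path
spoils at most one choice of `b`. -/
theorem HasEscape.hasRainbowCopy_two_mul_card_add_four (hc : IsProperEdgeColoring G c)
    (hAB : ∀ a ∈ A, ∀ b ∈ B, G.Adj b a) (hA : 2 ≤ A.card) (hB : 5 * A.card + 4 ≤ B.card)
    {R : Finset V} (hRB : R ⊆ B) (hR : 7 ≤ R.card) {N : V → Finset V} {π : V → V}
    (hN : ∀ b ∈ R, 4 ≤ (N b).card ∧ π b = b ∧
      ∀ l ∈ N b, G.Adj b l ∧ l ∉ A ∧ l ∉ B ∧ π l = b)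
    (h : HasEscape G c A) : HasRainbowCopy G (pathGraph (2 * A.card + 4)) c := by
  classical
  obtain ⟨a, ha, v, p, hp, hlen, hpA⟩ := h
  obtain ⟨z, hz, hza⟩ := A.exists_mem_ne hA a
  have hcolors : (p.edges.map c).toFinset.card ≤ 3 := by
    simpa [hlen] using (p.edges.map c).toFinset_card_le
  obtain ⟨R', hR', hR'π, hR'card⟩ := exists_subset_forall_notMem R (p.support.tail.map π)
  rw [List.length_map, List.length_tail, Walk.length_support, hlen] at hR'card
  obtain ⟨b, hb, hzb⟩ := hc.exists_color_notMem (fun b hb => (hAB z hz b (hRB (hR' hb))).symm)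
    (U := (p.edges.map c).toFinset) (by omega)
  obtain ⟨hNcard, hπb, hNb⟩ := hN b (hR' hb)
  obtain ⟨l, hl, hbl⟩ := hc.exists_color_notMem (fun l hl => (hNb l hl).1)
    (hcolors.trans_lt hNcard)
  obtain ⟨hadj, hlA, hlB, hπl⟩ := hNb l hl
  have hnot {x : V} (hx : π x = b) (hxa : x ≠ a) : x ∉ p.support := by
    rw [Walk.mem_support_iff, not_or]
    exact ⟨hxa, fun h => hR'π b hb (List.mem_map.2 ⟨x, h, hx⟩)⟩
  have hbB := hRB (hR' hb)
  have hba := (hAB a ha b hbB).ne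
  refine hp.hasRainbowCopy_two_mul_card_add_four hc hAB hB hlen ha hpA hz hza hbB (hnot hπb hba)
    ⟨hnot hπl fun h => hlA (h ▸ ha), hlA, hlB⟩ hadj fun e he => ?_
  rw [Sym2.eq_swap (a := b) (b := z)]
  have := List.mem_toFinset.2 (List.mem_map_of_mem (f := c) he)
  grind

theorem hasRainbowCopy_of_adj_of_forall_adj (hc : IsProperEdgeColoring G c)
    (hAB : ∀ a ∈ A, ∀ b ∈ B, G.Adj b a) (hA : 2 ≤ A.card) (hB : 5 * A.card ≤ B.card + 1)
    {d d' b : V} (hd : d ∈ B) (hd' : d' ∈ B) (hdd' : G.Adj d d') (hb : b ∈ B) (hbd : b ≠ d)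
    (hbd' : b ≠ d') {L : Finset V} (hL : ∀ l ∈ L, G.Adj l b ∧ l ∉ A ∧ l ∉ B)
    (hLcard : 2 * A.card < L.card) : HasRainbowCopy G (pathGraph (2 * A.card + 3)) c := by
  classical
  obtain ⟨z, hz, hbz⟩ := hc.exists_color_notMem (fun x hx => hAB x hx b hb)
    (U := {c s(d, d')}) (by simp; omega)
  obtain ⟨a, ha, haz⟩ := A.exists_mem_ne hA z
  obtain ⟨A', hA', hA'card, haA', hzA'⟩ := exists_subset_card_add_two hz ha haz
  wlog hcol : c s(a, d) ≠ c s(b, z) generalizing d d'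
  · refine this hd' hd hdd'.symm hbd' hbd (by rwa [Sym2.eq_swap]) fun h => ?_
    exact hc.ne (hAB a ha d hd).symm (hAB a ha d' hd').symm hdd'.ne (by grind)
  have hAnB : ∀ x ∈ A, x ∉ B := fun x hx hxB => (hAB x hx x hxB).ne rfl
  have hp := IsRainbowPath.cons_cons_nil hc (hAB a ha d hd).symm hdd' (by grind)
  obtain ⟨C, hCB, hC, hCcard⟩ := exists_subset_forall_notMem B [d, d', b]
  change B.card ≤ C.card + 3 at hCcard
  have hCA : ∀ x ∈ A, ∀ b ∈ C, G.Adj b x := fun x hx b hb => hAB x hx b (hCB hb)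
  have hsupp {x : V} : x ∈ [a, d, d'] ↔ x = a ∨ x = d ∨ x = d' := by simp
  obtain ⟨q, hq, hqlen, hqsupp, hqU, -⟩ := hp.exists_sweep hc (z := z) (A := A') (C := C)
    (U := {c s(b, z)}) (by simp) hzA' (fun x hx => hsupp.not.2 (by grind))
    (fun x hx => hsupp.not.2 (by grind)) (hCA a ha) (by grind)
    (by simpa [hcol] using fun h => hbz (by simp [h])) (by simp; omega)
  have hmem {x : V} (hx : x ∈ q.support) : x = d ∨ x = d' ∨ x ∈ A ∨ x ∈ C := by
    rcases hqsupp x hx with hx | hx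
    · have := hsupp.1 hx
      grind
    · grind
  have hqb := hq.cons hc (hAB z hz b hb) (fun h => by grind) (fun h => by
    obtain ⟨e, he, hce⟩ := List.mem_map.1 h
    exact hqU e (List.mem_of_mem_tail he) (by simp [hce]))
  obtain ⟨l, -, hlb, hql⟩ := hqb.exists_cons hc (fun l hl => (hL l hl).1) (fun l hl h => by
    rw [Walk.support_cons, List.mem_cons] at h
    have := hL l hl
    grind) (by simp_all; omega)
  refine hql.hasRainbowCopy ?_
  simp only [Walk.length_cons, Walk.length_nil] at hqlen ⊢
  omega

end CompletePairs

/-! ### Graphs without long paths -/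

section AttachVertices

variable {W L : Type}

/-- The graph obtained from `H` by adding, for each `l : L`, a new vertex whose neighbors are the
vertices in `N l`. -/
def attachVertices (H : SimpleGraph W) (N : L → Finset W) : SimpleGraph (W ⊕ L) where
  Adj
    | .inl w, .inl w' => H.Adj w w'
    | .inl w, .inr l => w ∈ N l
    | .inr l, .inl w => w ∈ N l
    | .inr _, .inr _ => False
  symm := ⟨by rintro (w | l) (w' | l') <;> simp +contextual [H.adj_comm]⟩
  loopless := ⟨by rintro (w | _) <;> simp⟩

variable {H : SimpleGraph W} {N : L → Finset W} {w w' : W} {l l' : L}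

@[simp] theorem attachVertices_adj_inl_inl :
    (attachVertices H N).Adj (.inl w) (.inl w') ↔ H.Adj w w' := .rfl

@[simp] theorem attachVertices_adj_inl_inr :
    (attachVertices H N).Adj (.inl w) (.inr l) ↔ w ∈ N l := .rfl

@[simp] theorem attachVertices_adj_inr_inl :
    (attachVertices H N).Adj (.inr l) (.inl w) ↔ w ∈ N l := .rfl

@[simp] theorem attachVertices_not_adj_inr_inr :
    ¬ (attachVertices H N).Adj (.inr l) (.inr l') := id

theorem edgeSet_attachVertices : (attachVertices H N).edgeSet =
    Sym2.map .inl '' H.edgeSet ∪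
      Set.range fun e : Σ l, N l => s(Sum.inl e.2.1, Sum.inr e.1) := by
  ext e
  induction e using Sym2.ind with
  | _ x y =>
    rcases x with w | l <;> rcases y with w' | l' <;>
      simp [Sym2.exists, and_or_left, exists_or, H.adj_comm]

theorem ncard_edgeSet_attachVertices [Finite W] [Fintype L] :
    (attachVertices H N).edgeSet.ncard = H.edgeSet.ncard + ∑ l, (N l).card := by
  have hinj : Function.Injective
      fun e : Σ l, N l => s((Sum.inl e.2.1 : W ⊕ L), Sum.inr e.1) := by
    rintro ⟨l, w, hw⟩ ⟨l', w', hw'⟩ h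
    obtain ⟨rfl, rfl⟩ : w = w' ∧ l = l' := by simpa using h
    rfl
  rw [edgeSet_attachVertices, Set.ncard_union_eq ?_ (Set.toFinite _) (Set.toFinite _),
    Set.ncard_image_of_injective _ (Sym2.map.injective Sum.inl_injective),
    Set.ncard_range_of_injective hinj]
  · simp
  · rw [Set.disjoint_right]
    rintro _ ⟨⟨l, w⟩, rfl⟩
    simp [Sym2.exists]

end AttachVertices

theorem two_mul_ncard_edgeSet_bot_boxProd_top (ι α : Type) [Fintype ι] [Fintype α] :
    2 * ((⊥ : SimpleGraph ι) □ (⊤ : SimpleGraph α)).edgeSet.ncard =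
      Fintype.card ι * (Fintype.card α * (Fintype.card α - 1)) := by
  classical
  rw [← coe_edgeFinset, Set.ncard_coe_finset, ← sum_degrees_eq_twice_card_edges]
  simp [degree_boxProd, mul_assoc]

section PathLength

variable {V : Type} {G : SimpleGraph V}

open scoped Classical in
/-- Every edge of the path has an end in `S ∪ D`; a vertex of `S` lies on at most two edges of the
path, a pendant vertex from `D` only on one, as an end of the path. -/
theorem length_le_two_mul_card_add {S : Finset V} {D : Set V}
    (hD : ∀ d ∈ D, ∀ x y, G.Adj d x → G.Adj d y → x = y) {u v : V} {p : G.Walk u v}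
    (hp : p.IsPath) (hSD : ∀ x ∈ p.support, ∀ y, G.Adj x y → x ∈ S ∨ y ∈ S ∨ x ∈ D ∨ y ∈ D) :
    p.length ≤ 2 * S.card + (if u ∈ D then 1 else 0) + (if v ∈ D then 1 else 0) := by
  suffices h : p.length + (if u ∈ S then 1 else 0) ≤
      2 * p.support.countP (· ∈ S) + (if u ∈ D then 1 else 0) + (if v ∈ D then 1 else 0) by
    have hcount : p.support.countP (· ∈ S) ≤ S.card := by
      rw [List.countP_eq_length_filter,
        ← List.toFinset_card_of_nodup (hp.support_nodup.filter _)]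
      exact Finset.card_le_card fun x => by simp
    omega
  induction p with
  | nil => grind [Walk.support_nil, Walk.length_nil]
  | @cons u w v h q ih =>
    obtain ⟨hq, huq⟩ := (Walk.cons_isPath_iff h q).1 hp
    simp only [Walk.support_cons, List.mem_cons, forall_eq_or_imp] at hSD
    have hend : w ∈ D → w = v ∧ q.length = 0 := fun hw => by
      cases q with
      | nil => simp
      | @cons _ x _ h' q =>
        rw [hD w hw u x h.symm h'] at huq
        simp at huq
    have hcover : w ∉ D → u ∈ S ∨ w ∈ S ∨ u ∈ D := fun hw => by
      simpa [hw] using hSD.1 w h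
    have ih := ih hq fun x hx => hSD.2 x hx
    rw [Walk.length_cons, Walk.support_cons, List.countP_cons]
    grind

theorem eq_of_mem_support {ι : Type} {f : V → ι} (hf : ∀ x y, G.Adj x y → f x = f y) {u v : V}
    (p : G.Walk u v) : ∀ x ∈ p.support, f x = f u := by
  induction p with
  | nil => simp
  | cons h q ih => simpa [hf _ _ h] using ih

theorem exists_not_hasRainbowCopy_pathGraph [Countable V] {k : ℕ}
    (h : ∀ (u v : V) (p : G.Walk u v), p.IsPath → p.length ≠ k) :
    ∃ c : Sym2 V → ℕ, IsProperEdgeColoring G c ∧ ¬ HasRainbowCopy G (pathGraph (k + 1)) c := by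
  have : Countable (Sym2 V) := inferInstanceAs (Countable (Quot _))
  obtain ⟨c, hc⟩ := exists_injective_nat (Sym2 V)
  refine ⟨c, fun e _ e' _ hne _ => hc.ne hne, fun hcopy => ?_⟩
  obtain ⟨u, v, p, hp, hlen⟩ := hasRainbowCopy_pathGraph_iff.1 hcopy
  exact h u v p hp.1 hlen

end PathLength

/-! ### Rimmed cliques -/

/-- One clique with vertex set `α` for each `i : ι`, an independent set of rim vertices `b : β`,
each joined to the whole clique `cp b`, and leaves `l : Λ`, each hanging from the rim vertex
`par l`. -/
def rimmedCliques {ι α β Λ : Type} [Fintype α] (cp : β → ι) (par : Λ → β) :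
    SimpleGraph (((ι × α) ⊕ β) ⊕ Λ) :=
  attachVertices (attachVertices (⊥ □ ⊤) fun b => {cp b} ×ˢ Finset.univ) fun l => {.inr (par l)}

namespace rimmedCliques

variable {ι α β Λ : Type}

/-- The clique vertices of `rimmedCliques`. -/
abbrev core (i : ι) (x : α) : ((ι × α) ⊕ β) ⊕ Λ := .inl (.inl (i, x))

/-- The rim vertices of `rimmedCliques`. -/
abbrev rim (b : β) : ((ι × α) ⊕ β) ⊕ Λ := .inl (.inr b)

/-- The pendant vertices of `rimmedCliques`. -/
abbrev leaf (l : Λ) : ((ι × α) ⊕ β) ⊕ Λ := .inr l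

variable [Fintype α] {cp : β → ι} {par : Λ → β} {i j : ι} {x y : α} {b b' : β} {l l' : Λ}

@[simp] theorem adj_core_core :
    (rimmedCliques cp par).Adj (core i x) (core j y) ↔ i = j ∧ x ≠ y := by
  simp [rimmedCliques, boxProd_adj, and_comm]

@[simp] theorem adj_rim_core :
    (rimmedCliques (α := α) cp par).Adj (rim b) (core i x) ↔ i = cp b := by
  simp [rimmedCliques, eq_comm]

@[simp] theorem adj_core_rim :
    (rimmedCliques (α := α) cp par).Adj (core i x) (rim b) ↔ i = cp b := by
  rw [adj_comm, adj_rim_core]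

@[simp] theorem not_adj_rim_rim :
    ¬ (rimmedCliques (α := α) cp par).Adj (rim b) (rim b') := by
  simp [rimmedCliques]

@[simp] theorem adj_rim_leaf :
    (rimmedCliques (α := α) cp par).Adj (rim b) (leaf l) ↔ b = par l := by
  simp [rimmedCliques]

@[simp] theorem adj_leaf_rim :
    (rimmedCliques (α := α) cp par).Adj (leaf l) (rim b) ↔ b = par l := by
  simp [rimmedCliques]

@[simp] theorem not_adj_leaf_core :
    ¬ (rimmedCliques cp par).Adj (leaf l) (core i x) := by
  simp [rimmedCliques]

@[simp] theorem not_adj_core_leaf :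
    ¬ (rimmedCliques cp par).Adj (core i x) (leaf l) := by
  simp [rimmedCliques]

@[simp] theorem not_adj_leaf_leaf :
    ¬ (rimmedCliques (α := α) cp par).Adj (leaf l) (leaf l') := by
  simp [rimmedCliques]

theorem two_mul_ncard_edgeSet [Fintype ι] [Fintype β] [Fintype Λ] :
    2 * (rimmedCliques (α := α) cp par).edgeSet.ncard =
      Fintype.card ι * (Fintype.card α * (Fintype.card α - 1)) +
        2 * (Fintype.card β * Fintype.card α + Fintype.card Λ) := by
  rw [rimmedCliques, ncard_edgeSet_attachVertices, ncard_edgeSet_attachVertices, mul_add, mul_add,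
    two_mul_ncard_edgeSet_bot_boxProd_top]
  simp [mul_add, add_assoc]

/-- The clique to which a vertex of `rimmedCliques` belongs. -/
def index (cp : β → ι) (par : Λ → β) : ((ι × α) ⊕ β) ⊕ Λ → ι
  | .inl (.inl (i, _)) => i
  | .inl (.inr b) => cp b
  | .inr l => cp (par l)

/-- The vertices of the clique with index `i`. -/
def coreFinset (i : ι) : Finset (((ι × α) ⊕ β) ⊕ Λ) :=
  Finset.univ.map (((Function.Embedding.sectR i α).trans .inl).trans .inl)

@[simp] theorem card_coreFinset :
    (coreFinset i : Finset (((ι × α) ⊕ β) ⊕ Λ)).card = Fintype.card α :=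
  Finset.card_map _

@[simp] theorem mem_coreFinset {v : ((ι × α) ⊕ β) ⊕ Λ} :
    v ∈ coreFinset i ↔ ∃ x, core i x = v := by
  simp [coreFinset]

theorem index_eq_of_adj {u v : ((ι × α) ⊕ β) ⊕ Λ} (h : (rimmedCliques cp par).Adj u v) :
    index cp par u = index cp par v := by
  rcases u with ((⟨i, x⟩ | b) | l) <;> rcases v with ((⟨j, y⟩ | b') | l') <;>
    simp_all [index]

theorem eq_rim_of_adj_leaf {v : ((ι × α) ⊕ β) ⊕ Λ} (h : (rimmedCliques cp par).Adj (leaf l) v) :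
    v = rim (par l) := by
  rcases v with ((⟨j, y⟩ | b') | l') <;> simp_all

open scoped Classical in
theorem length_le_of_isPath {u v : ((ι × α) ⊕ β) ⊕ Λ} {p : (rimmedCliques cp par).Walk u v}
    (hp : p.IsPath) : p.length ≤ 2 * Fintype.card α +
      (if u ∈ Set.range leaf then 1 else 0) + (if v ∈ Set.range leaf then 1 else 0) := by
  rw [← card_coreFinset (β := β) (Λ := Λ) (i := index cp par u)]
  refine length_le_two_mul_card_add ?_ hp fun x hx y hxy => ?_
  · rintro _ ⟨l, rfl⟩ x y hx hy
    rw [eq_rim_of_adj_leaf hx, eq_rim_of_adj_leaf hy]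
  · have hxu := eq_of_mem_support (fun _ _ => index_eq_of_adj) p x hx
    rcases x with ((⟨i, x⟩ | b) | l) <;> rcases y with ((⟨j, y⟩ | b') | l') <;>
      simp_all [index]

theorem length_le_two_mul_add_two {u v : ((ι × α) ⊕ β) ⊕ Λ}
    {p : (rimmedCliques cp par).Walk u v} (hp : p.IsPath) :
    p.length ≤ 2 * Fintype.card α + 2 := by
  have := length_le_of_isPath hp
  split_ifs at this <;> omega

theorem length_le_two_mul_add_one [Nonempty α]
    (hpar : ∀ l l', cp (par l) = cp (par l') → par l = par l') {u v : ((ι × α) ⊕ β) ⊕ Λ}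
    {p : (rimmedCliques cp par).Walk u v} (hp : p.IsPath) :
    p.length ≤ 2 * Fintype.card α + 1 := by
  have hle := length_le_of_isPath hp
  by_contra! hlt
  have hpos := Fintype.card_pos (α := α)
  obtain ⟨⟨l, rfl⟩, l', rfl⟩ : u ∈ Set.range leaf ∧ v ∈ Set.range leaf := by
    split_ifs at hle <;> first | omega | simp_all
  have hindex := eq_of_mem_support (fun _ _ => index_eq_of_adj) p _ p.end_mem_support
  have hnil : ¬ p.Nil := by simp [← Walk.length_eq_zero_iff]; omega
  have hends : p.snd = p.penultimate := by
    rw [eq_rim_of_adj_leaf (p.adj_snd hnil), eq_rim_of_adj_leaf (p.adj_penultimate hnil).symm,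
      hpar l' l hindex]
  have := hp.getVert_injOn (by simp; omega) (by simp) hends
  omega

end rimmedCliques

section LeafFinset

variable {W β Λ : Type} [Finite Λ] {par : Λ → β} {b : β}

/-- The vertices `l : Λ` with `par l = b`, as vertices of a graph of the form
`attachVertices H N`. -/
noncomputable def leafFinset (par : Λ → β) (b : β) : Finset (W ⊕ Λ) :=
  (Set.toFinite (par ⁻¹' {b})).toFinset.map .inr

@[simp] theorem mem_leafFinset {v : W ⊕ Λ} :
    v ∈ leafFinset par b ↔ ∃ l, par l = b ∧ .inr l = v := by
  simp [leafFinset]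

theorem card_leafFinset : (leafFinset par b : Finset (W ⊕ Λ)).card = (par ⁻¹' {b}).ncard := by
  rw [leafFinset, Finset.card_map, Set.ncard_eq_toFinset_card]

theorem mem_leafFinset_erase [DecidableEq (W ⊕ Λ)] {l : Λ} {v : W ⊕ Λ} :
    v ∈ (leafFinset par b).erase (.inr l) ↔ ∃ l' ≠ l, par l' = b ∧ .inr l' = v := by
  rw [Finset.mem_erase, mem_leafFinset]
  grind

theorem card_leafFinset_erase_add_one [DecidableEq (W ⊕ Λ)] (l : Λ) :
    ((leafFinset par (par l)).erase (.inr l : W ⊕ Λ)).card + 1 = (par ⁻¹' {par l}).ncard := by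
  rw [Finset.card_erase_add_one (by simp), card_leafFinset]

end LeafFinset

namespace rimmedCliques

variable {ι α β Λ : Type} {cp : β → ι} {par : Λ → β} {i j : ι} {b b' : β} {l : Λ}

/-- The rim vertices joined to the clique with index `i`. -/
noncomputable def rimFinset [Finite β] (cp : β → ι) (i : ι) : Finset (((ι × α) ⊕ β) ⊕ Λ) :=
  (Set.toFinite (cp ⁻¹' {i})).toFinset.map (.trans .inr .inl)

@[simp] theorem mem_rimFinset [Finite β] {v : ((ι × α) ⊕ β) ⊕ Λ} :
    v ∈ rimFinset cp i ↔ ∃ b, cp b = i ∧ rim b = v := by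
  simp [rimFinset]

theorem card_rimFinset [Finite β] :
    (rimFinset cp i : Finset (((ι × α) ⊕ β) ⊕ Λ)).card = (cp ⁻¹' {i}).ncard := by
  rw [rimFinset, Finset.card_map, Set.ncard_eq_toFinset_card]

variable [Fintype α] {x : α} {G : SimpleGraph (((ι × α) ⊕ β) ⊕ Λ)}
  {c : Sym2 (((ι × α) ⊕ β) ⊕ Λ) → ℕ}

theorem adj_of_mem_coreFinset_of_mem_rimFinset [Finite β] (hG : rimmedCliques cp par ≤ G) :
    ∀ a ∈ coreFinset i, ∀ b ∈ rimFinset cp i, G.Adj b a := by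
  simp only [mem_coreFinset, mem_rimFinset]
  rintro _ ⟨x, rfl⟩ _ ⟨b, rfl, rfl⟩
  exact hG (by simp)

section Escape

variable (hG : rimmedCliques cp par ≤ G) (hc : IsProperEdgeColoring G c)
include hG hc

theorem hasEscape_of_adj_rim (hα : 2 ≤ Fintype.card α) {y z : ((ι × α) ⊕ β) ⊕ Λ}
    (hy : G.Adj (rim b) y) (hyz : G.Adj y z) (hz : z ≠ rim b) (hyb : y ∉ coreFinset (cp b))
    (hzb : z ∉ coreFinset (cp b)) : HasEscape G c (coreFinset (cp b)) :=
  .of_forall_adj hc (by simpa) (by simpa using fun x => hG (by simp)) hy hyz hz.symm hyb hzb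

theorem hasEscape_of_adj_leaf [Finite Λ] (hα : 2 ≤ Fintype.card α)
    (hleaf : ∀ l, 3 ≤ (par ⁻¹' {par l}).ncard)
    {y : ((ι × α) ⊕ β) ⊕ Λ} (hy : G.Adj (leaf l) y) (hyl : y ≠ rim (par l)) :
    HasEscape G c (coreFinset (cp (par l))) := by
  classical
  by_cases hcore : y ∈ coreFinset (cp (par l))
  · refine .of_forall_adj_end hc (C := (leafFinset par (par l)).erase (leaf l)) hcore hy.symm
      (hG (adj_leaf_rim.2 rfl)) (by simp) (by simp) ?_ ?_ (by simp) ?_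
    · simp only [mem_leafFinset_erase]
      rintro _ ⟨l', -, hl', rfl⟩
      exact hG (by simp [hl'])
    · simp +contextual
    · refine Nat.le_of_succ_le_succ ((hleaf l).trans_eq ?_)
      exact (card_leafFinset_erase_add_one l).symm
  · exact hasEscape_of_adj_rim hG hc hα (hG (adj_rim_leaf.2 rfl)) hy hyl (by simp) hcore

theorem hasEscape_of_adj_rim_core (hα : 2 ≤ Fintype.card α) (h : G.Adj (rim b) (core j x))
    (hj : j ≠ cp b) : HasEscape G c (coreFinset (cp b)) := by
  have := Fintype.one_lt_card_iff_nontrivial.1 hα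
  obtain ⟨y, hyx⟩ := exists_ne x
  exact hasEscape_of_adj_rim hG hc hα h (hG (adj_core_core.2 ⟨rfl, hyx.symm⟩)) (by simp)
    (by simpa using hj.symm) (by simpa using hj.symm)

theorem hasEscape_of_adj_core_core [Finite β] {y : α} (hα : 2 ≤ Fintype.card α)
    (hrim : ∀ i, 2 ≤ (cp ⁻¹' {i}).ncard)
    (h : G.Adj (core i x) (core j y)) (hij : i ≠ j) : HasEscape G c (coreFinset i) := by
  have := Fintype.one_lt_card_iff_nontrivial.1 hα
  obtain ⟨z, hzy⟩ := exists_ne y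
  refine .of_forall_adj_end hc (C := rimFinset cp j) (by simp) h
    (hG (adj_core_core.2 ⟨rfl, hzy.symm⟩)) (by simpa using hij) (by simpa using hij)
    ?_ ?_ (by simp) (by simpa [card_rimFinset] using hrim j)
  · simp only [mem_rimFinset]
    rintro _ ⟨b, rfl, rfl⟩
    exact hG (by simp)
  · simp +contextual

theorem hasEscape_of_adj_rim_rim (hα : 2 ≤ Fintype.card α) (h : G.Adj (rim b) (rim b')) :
    (∃ i, HasEscape G c (coreFinset i)) ∨ cp b = cp b' ∧ ∀ l, par l ≠ b ∧ par l ≠ b' := by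
  by_cases hcp : cp b = cp b'
  · by_contra! ⟨hescape, hleaf⟩
    obtain ⟨l, hl⟩ := hleaf hcp
    rcases eq_or_ne (par l) b with rfl | hlb
    · exact hescape _ (hasEscape_of_adj_rim hG hc hα h.symm (hG (adj_rim_leaf.2 rfl)) (by simp)
        (by simp) (by simp))
    · obtain rfl := hl hlb
      exact hescape _ (hasEscape_of_adj_rim hG hc hα h (hG (adj_rim_leaf.2 rfl)) (by simp)
        (by simp) (by simp))
  · have : Nonempty α := Fintype.card_pos_iff.1 (by omega)
    obtain ⟨x⟩ := this
    exact .inl ⟨_, hasEscape_of_adj_rim hG hc hα h (hG (adj_rim_core (x := x).2 rfl)) (by simp)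
      (by simp) (by simpa using hcp)⟩

theorem exists_hasEscape_or_adj_rim_rim [Finite β] [Finite Λ] (hα : 2 ≤ Fintype.card α)
    (hrim : ∀ i, 2 ≤ (cp ⁻¹' {i}).ncard)
    (hleaf : ∀ l, 3 ≤ (par ⁻¹' {par l}).ncard)
    {u v : ((ι × α) ⊕ β) ⊕ Λ} (h : G.Adj u v) (hn : ¬ (rimmedCliques cp par).Adj u v) :
    (∃ i, HasEscape G c (coreFinset i)) ∨
      ∃ b b', G.Adj (rim b) (rim b') ∧ cp b = cp b' ∧ ∀ l, par l ≠ b ∧ par l ≠ b' := by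
  have hne := h.ne
  rcases u with ((⟨i, x⟩ | b) | l)
  · rcases v with ((⟨j, y⟩ | b') | l')
    · exact .inl ⟨_, hasEscape_of_adj_core_core hG hc hα hrim h (by grind [adj_core_core])⟩
    · exact .inl ⟨_, hasEscape_of_adj_rim_core hG hc hα h.symm (by simpa using hn)⟩
    · exact .inl ⟨_, hasEscape_of_adj_leaf hG hc hα hleaf h.symm (by simp)⟩
  · rcases v with ((⟨j, y⟩ | b') | l')
    · exact .inl ⟨_, hasEscape_of_adj_rim_core hG hc hα h (by simpa using hn)⟩
    · exact (hasEscape_of_adj_rim_rim hG hc hα h).imp_right fun hb => ⟨b, b', h, hb⟩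
    · exact .inl ⟨_, hasEscape_of_adj_leaf hG hc hα hleaf h.symm (by simpa using hn)⟩
  · refine .inl ⟨_, hasEscape_of_adj_leaf hG hc hα hleaf h ?_⟩
    rintro rfl
    simp at hn

end Escape

end rimmedCliques

theorem isRainbowSat_of_forall_le {V W : Type} {G : SimpleGraph V} {H : SimpleGraph W}
    (hfree : ∃ c : Sym2 V → ℕ, IsProperEdgeColoring G c ∧ ¬ HasRainbowCopy G H c)
    (h : ∀ (G' : SimpleGraph V) (c : Sym2 V → ℕ), G ≤ G' → IsProperEdgeColoring G' c →
      ∀ u v, G'.Adj u v → ¬ G.Adj u v → HasRainbowCopy G' H c) : IsRainbowSat G H :=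
  ⟨hfree, fun u v hne hn c hc => h _ c le_sup_left hc u v (.inr (by simp [hne])) hn⟩

namespace rimmedCliques

variable {ι α β Λ : Type} {cp : β → ι} {par : Λ → β} [Fintype α] [Finite β] [Finite Λ]

theorem isRainbowSat_pathGraph_two_mul_add_three [Countable ι] (hα : 2 ≤ Fintype.card α)
    (hrim : ∀ i, 5 * Fintype.card α ≤ (cp ⁻¹' {i}).ncard + 1)
    (hpar : ∀ l l', cp (par l) = cp (par l') → par l = par l') (hex : ∀ i, ∃ l, cp (par l) = i)
    (hleaf : ∀ l, 2 * Fintype.card α < (par ⁻¹' {par l}).ncard) :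
    IsRainbowSat (rimmedCliques (α := α) cp par) (pathGraph (2 * Fintype.card α + 3)) := by
  have : Nonempty α := Fintype.card_pos_iff.1 (by omega)
  refine isRainbowSat_of_forall_le (exists_not_hasRainbowCopy_pathGraph fun u v p hp => ?_) ?_
  · have := length_le_two_mul_add_one hpar hp
    omega
  intro G c hG hc u v huv hn
  rcases exists_hasEscape_or_adj_rim_rim hG hc hα (fun i => by have := hrim i; omega)
    (fun l => by have := hleaf l; omega) huv hn with ⟨i, h⟩ | ⟨b, b', hbb', hcp, hbare⟩
  · rw [← card_coreFinset (i := i)]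
    exact h.hasRainbowCopy_two_mul_card_add_three hc (adj_of_mem_coreFinset_of_mem_rimFinset hG)
      (by simpa) (by simpa [card_rimFinset] using hrim i)
  · obtain ⟨l, hl⟩ := hex (cp b)
    rw [← card_coreFinset (i := cp b)]
    refine hasRainbowCopy_of_adj_of_forall_adj hc (adj_of_mem_coreFinset_of_mem_rimFinset hG)
      (by simpa) (by simpa [card_rimFinset] using hrim (cp b)) (d := rim b) (d' := rim b')
      (b := rim (par l)) (L := leafFinset par (par l)) (by simp) (by simp [hcp]) hbb' (by simp [hl])
      (by simpa using (hbare l).1) (by simpa using (hbare l).2) ?_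
      (by simpa [card_leafFinset] using hleaf l)
    simp only [mem_leafFinset]
    rintro _ ⟨l', hl', rfl⟩
    exact ⟨hG (by simp [hl']), by simp, by simp⟩

theorem isRainbowSat_pathGraph_two_mul_add_four [Countable ι] (hα : 2 ≤ Fintype.card α)
    (hrim : ∀ i, 5 * Fintype.card α + 4 ≤ (cp ⁻¹' {i}).ncard)
    (hleaf : ∀ b, 3 ≤ (par ⁻¹' {b}).ncard)
    (hrich : ∀ i, ∃ R : Finset β, 7 ≤ R.card ∧ ∀ b ∈ R, cp b = i ∧ 4 ≤ (par ⁻¹' {b}).ncard) :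
    IsRainbowSat (rimmedCliques (α := α) cp par) (pathGraph (2 * Fintype.card α + 4)) := by
  refine isRainbowSat_of_forall_le (exists_not_hasRainbowCopy_pathGraph fun u v p hp => ?_) ?_
  · have := length_le_two_mul_add_two hp
    omega
  intro G c hG hc u v huv hn
  rcases exists_hasEscape_or_adj_rim_rim hG hc hα (fun i => by have := hrim i; omega)
    (fun l => hleaf _) huv hn with ⟨i, h⟩ | ⟨b, _, -, -, hbare⟩
  · obtain ⟨R, hRcard, hR⟩ := hrich i
    rw [← card_coreFinset (i := i)]
    refine h.hasRainbowCopy_two_mul_card_add_four hc (adj_of_mem_coreFinset_of_mem_rimFinset hG)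
      (by simpa) (by simpa [card_rimFinset] using hrim i) (R := R.map (.trans .inr .inl))
      (N := Sum.elim (Sum.elim (fun _ => ∅) (leafFinset par)) fun _ => ∅)
      (π := Sum.elim .inl (rim ∘ par)) (fun v => ?_) (by simpa using hRcard) ?_
    · simp only [Finset.mem_map, mem_rimFinset]
      rintro ⟨b, hb, rfl⟩
      exact ⟨b, (hR b hb).1, rfl⟩
    · simp only [Finset.mem_map]
      rintro _ ⟨b, hb, rfl⟩
      refine ⟨by simpa [card_leafFinset] using (hR b hb).2, by simp, ?_⟩
      rintro l hl
      obtain ⟨l, rfl, rfl⟩ := mem_leafFinset.1 hl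
      exact ⟨hG (by simp), by simp, by simp, by simp⟩
  · obtain ⟨l, hl⟩ := Set.nonempty_of_ncard_ne_zero (s := par ⁻¹' {b}) (by have := hleaf b; omega)
    exact absurd hl (hbare l).1

end rimmedCliques

/-! ### Numbers of vertices and edges -/

section Comap

variable {V V' W : Type} {G : SimpleGraph V} {G' : SimpleGraph V'} {H : SimpleGraph W}
  {c : Sym2 V' → ℕ}

theorem IsProperEdgeColoring.comp_map (hc : IsProperEdgeColoring G' c) (φ : G ↪g G') :
    IsProperEdgeColoring G (c ∘ Sym2.map φ) := by
  rintro e he e' he' hne ⟨v, hv, hv'⟩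
  exact hc _ (φ.toHom.map_mem_edgeSet he) _ (φ.toHom.map_mem_edgeSet he')
    ((Sym2.map.injective φ.injective).ne hne)
    ⟨φ v, Sym2.mem_map.2 ⟨v, hv, rfl⟩, Sym2.mem_map.2 ⟨v, hv', rfl⟩⟩

theorem HasRainbowCopy.map {φ : G ↪g G'} (h : HasRainbowCopy G H (c ∘ Sym2.map φ)) :
    HasRainbowCopy G' H c := by
  obtain ⟨f, hf, hadj, hcol⟩ := h
  refine ⟨φ ∘ f, φ.injective.comp hf, fun a b hab => φ.map_adj_iff.2 (hadj a b hab), ?_⟩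
  simpa only [Function.comp_apply, Sym2.map_map] using hcol

theorem IsRainbowSat.comap (h : IsRainbowSat G H) (e : V' ≃ V) :
    IsRainbowSat (G.comap e) H := by
  obtain ⟨⟨c, hc, hfree⟩, hsat⟩ := h
  refine ⟨⟨_, hc.comp_map (Iso.comap e G).toEmbedding, fun hcopy => hfree hcopy.map⟩,
    fun u v huv hn c hc => ?_⟩
  have hcomap : G.comap e ⊔ fromEdgeSet {s(u, v)} =
      (G ⊔ fromEdgeSet {s(e u, e v)}).comap e := by
    ext x y
    simp
  rw [hcomap] at hc ⊢
  exact (hsat (e u) (e v) (e.injective.ne huv) hn _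
    (hc.comp_map (Iso.comap e _).symm.toEmbedding)).map

theorem IsRainbowSat.exists_fin [Fintype V] {n : ℕ} (hn : Fintype.card V = n)
    (h : IsRainbowSat G H) :
    ∃ G' : SimpleGraph (Fin n), IsRainbowSat G' H ∧ G'.edgeSet.ncard = G.edgeSet.ncard :=
  let e := (Fintype.equivFinOfCardEq hn).symm
  ⟨G.comap e, h.comap e, Set.ncard_congr' (Iso.comap e G).mapEdgeSet⟩

end Comap

theorem exists_forall_le_ncard_preimage {α β : Type} [Fintype α] [Fintype β] [Nonempty β]
    {μ : β → ℕ} (hμ : ∑ b, μ b ≤ Fintype.card α) :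
    ∃ f : α → β, ∀ b, μ b ≤ (f ⁻¹' {b}).ncard := by
  obtain ⟨e⟩ : Nonempty ((Σ b, Fin (μ b)) ↪ α) :=
    Function.Embedding.nonempty_of_card_le (by simpa using hμ)
  refine ⟨Function.extend e Sigma.fst fun _ => Classical.arbitrary β, fun b => ?_⟩
  have hsub : Set.range (fun x : Fin (μ b) => e ⟨b, x⟩) ⊆
      Function.extend e Sigma.fst (fun _ => Classical.arbitrary β) ⁻¹' {b} := by
    rintro _ ⟨x, rfl⟩
    exact e.injective.extend_apply ..
  have hinj : Function.Injective fun x : Fin (μ b) => e ⟨b, x⟩ :=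
    e.injective.comp sigma_mk_injective
  simpa [Set.ncard_range_of_injective hinj] using Set.ncard_le_ncard hsub

theorem exists_isRainbowSat_pathGraph_two_mul_add_three {s m t l : ℕ} (hs : 2 ≤ s) (hm : 0 < m)
    (ht : m * (5 * s - 1) ≤ t) (hl : m * (2 * s + 1) ≤ l) :
    ∃ G : SimpleGraph (Fin (m * s + t + l)), IsRainbowSat G (pathGraph (2 * s + 3)) ∧
      2 * G.edgeSet.ncard = m * (s * (s - 1)) + 2 * (t * s + l) := by
  have : Nonempty (Fin m) := ⟨⟨0, hm⟩⟩
  obtain ⟨cp, hcp⟩ := exists_forall_le_ncard_preimage (α := Fin t) (β := Fin m)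
    (μ := fun _ => 5 * s - 1) (by simpa using ht)
  obtain ⟨g, hg⟩ := exists_forall_le_ncard_preimage (α := Fin l) (β := Fin m)
    (μ := fun _ => 2 * s + 1) (by simpa using hl)
  have hne (i : Fin m) : ∃ b, cp b = i :=
    Set.nonempty_of_ncard_ne_zero (s := cp ⁻¹' {i}) (by have := hcp i; omega)
  choose hub hhub using hne
  have hinj : Function.Injective hub := Function.LeftInverse.injective hhub
  have hsat := rimmedCliques.isRainbowSat_pathGraph_two_mul_add_three (α := Fin s) (cp := cp)
    (par := hub ∘ g) (by simpa) (fun i => by have := hcp i; simp only [Fintype.card_fin]; omega)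
    (fun l l' h => by simpa [hhub, hinj.eq_iff] using h)
    (fun i => by
      obtain ⟨x, hx⟩ := Set.nonempty_of_ncard_ne_zero (s := g ⁻¹' {i}) (by have := hg i; omega)
      exact ⟨x, by simpa [hhub] using hx⟩)
    (fun x => by
      rw [Set.preimage_comp, Function.comp_apply, ← Set.image_singleton, hinj.preimage_image]
      simpa using hg (g x))
  rw [Fintype.card_fin] at hsat
  obtain ⟨G, hG, hcard⟩ := hsat.exists_fin (n := m * s + t + l) (by simp)
  exact ⟨G, hG, by simp [hcard, rimmedCliques.two_mul_ncard_edgeSet]⟩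

theorem exists_isRainbowSat_pathGraph_two_mul_add_four {s m t l : ℕ} (hs : 2 ≤ s) (hm : 0 < m)
    (ht : m * (5 * s + 4) ≤ t) (hl : 3 * t + 7 * m ≤ l) :
    ∃ G : SimpleGraph (Fin (m * s + t + l)), IsRainbowSat G (pathGraph (2 * s + 4)) ∧
      2 * G.edgeSet.ncard = m * (s * (s - 1)) + 2 * (t * s + l) := by
  have : Nonempty (Fin m) := ⟨⟨0, hm⟩⟩
  have : Nonempty (Fin t) := ⟨⟨0, by nlinarith⟩⟩
  obtain ⟨cp, hcp⟩ := exists_forall_le_ncard_preimage (α := Fin t) (β := Fin m)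
    (μ := fun _ => 5 * s + 4) (by simpa using ht)
  have hsub (i : Fin m) : ∃ R ⊆ ({b | cp b = i} : Finset (Fin t)), R.card = 7 := by
    refine Finset.exists_subset_card_eq ((by omega : 7 ≤ 5 * s + 4).trans ((hcp i).trans_eq ?_))
    rw [← Set.ncard_coe_finset]
    simp [Set.preimage]
  choose R hR hRcard using hsub
  obtain ⟨par, hpar⟩ := exists_forall_le_ncard_preimage (α := Fin l) (β := Fin t)
    (μ := fun b => 3 + ∑ i, if b ∈ R i then 1 else 0) (by
      rw [Finset.sum_add_distrib, Finset.sum_comm]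
      simpa [hRcard, mul_comm] using hl)
  have hsat := rimmedCliques.isRainbowSat_pathGraph_two_mul_add_four (α := Fin s) (cp := cp)
    (par := par) (by simpa) (by simpa using hcp) (fun b => (Nat.le_add_right ..).trans (hpar b))
    (fun i => ⟨R i, (hRcard i).ge, fun b hb => ⟨by simpa using hR i hb, ?_⟩⟩)
  · rw [Fintype.card_fin] at hsat
    obtain ⟨G, hG, hcard⟩ := hsat.exists_fin (n := m * s + t + l) (by simp)
    exact ⟨G, hG, by simp [hcard, rimmedCliques.two_mul_ncard_edgeSet]⟩
  · have hle := Finset.single_le_sum_of_canonicallyOrdered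
      (f := fun i => if b ∈ R i then 1 else 0) (Finset.mem_univ i)
    rw [if_pos hb] at hle
    exact (Nat.add_le_add_left hle 3).trans (hpar b)

theorem eleven_mul_sq_add_seven_mul_le {r : ℕ} (hr : 1 ≤ r) :
    11 * r ^ 2 + 7 * r ≤ 4 * 4 ^ r + 2 := by
  induction r, hr using Nat.le_induction with
  | base => norm_num
  | succ r hr ih => rw [pow_succ 4]; nlinarith

/-- With `m` cliques of order `r + 1`, the edge count amounts to
`m * ((r + 1) * (r - 2) / 2) + t * r = 2 * r * 4 ^ r`, which `m = r` makes solvable for `t`. -/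
theorem exists_isRainbowSat_pathGraph_two_mul_add_five {r n : ℕ} (hr : 1 ≤ r)
    (hn : (2 * r + 4) * (2 * 4 ^ r) ≤ n) :
    ∃ G : SimpleGraph (Fin n), IsRainbowSat G (pathGraph (2 * r + 5)) ∧
      G.edgeSet.ncard = n + 2 * r * 4 ^ r := by
  have hpow := eleven_mul_sq_add_seven_mul_le hr
  obtain ⟨q, rfl⟩ : ∃ q, r = q + 1 := ⟨r - 1, by omega⟩
  obtain ⟨d, hd⟩ := Nat.even_mul_succ_self q
  generalize 4 ^ (q + 1) = P at *
  obtain ⟨t, ht⟩ := Nat.exists_eq_add_of_le (show d ≤ 2 * P + 1 by nlinarith)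
  obtain ⟨l, rfl⟩ := Nat.exists_eq_add_of_le (show (q + 1) * (q + 2) + t ≤ n by nlinarith)
  obtain ⟨G, hG, hcard⟩ := exists_isRainbowSat_pathGraph_two_mul_add_three (s := q + 2)
    (m := q + 1) (t := t) (l := l) (by omega) (by omega) (by
      rw [show 5 * (q + 2) - 1 = 5 * q + 9 by omega]
      nlinarith) (by nlinarith)
  refine ⟨G, hG, ?_⟩
  rw [show q + 2 - 1 = q + 1 by omega] at hcard
  have hmul : (q + 1) * (2 * P + 1) = (q + 1) * (d + t) := by rw [ht]
  nlinarith

theorem eleven_mul_cube_add_seventeen_mul_sq_le {r : ℕ} (hr : 2 ≤ r) :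
    11 * r ^ 3 + 17 * r ^ 2 ≤ (4 * r + 2) * 4 ^ r + 2 * r := by
  induction r, hr using Nat.le_induction with
  | base => norm_num
  | succ r hr ih => rw [pow_succ 4]; nlinarith [sq_nonneg r]

theorem exists_add_eq_mul {r : ℕ} (hr : 1 ≤ r) (N : ℕ) :
    ∃ c w, 1 ≤ c ∧ c ≤ r ∧ c + N = r * w := by
  have hmod := Nat.mod_lt N hr
  refine ⟨r - N % r, N / r + 1, by omega, by omega, ?_⟩
  have hdiv := Nat.div_add_mod N r
  rw [mul_add]
  omega

/-- With `2 * c` cliques of order `r + 1`, the edge count amounts to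
`c * ((r + 1) * (r - 2)) + t * r = (2 * r + 1) * (2 * 4 ^ r)`, which is solvable for `t` once `r`
divides `c + 4 ^ r`. -/
theorem exists_isRainbowSat_pathGraph_two_mul_add_six {r n : ℕ} (hr : 2 ≤ r)
    (hn : (2 * r + 5) * (4 * 4 ^ r) ≤ n) :
    ∃ G : SimpleGraph (Fin n), IsRainbowSat G (pathGraph (2 * r + 6)) ∧
      G.edgeSet.ncard = n + (2 * r + 1) * (2 * 4 ^ r) := by
  have hpow := eleven_mul_cube_add_seventeen_mul_sq_le hr
  obtain ⟨q, rfl⟩ : ∃ q, r = q + 1 := ⟨r - 1, by omega⟩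
  generalize 4 ^ (q + 1) = P at *
  obtain ⟨c, w, hc, hcr, hw⟩ := exists_add_eq_mul (r := q + 1) (by omega) P
  obtain ⟨t, ht⟩ := Nat.exists_eq_add_of_le (show c * q ≤ 4 * P + 2 * w by nlinarith)
  have hrim : 2 * c * (5 * (q + 2) + 4) ≤ t := by
    suffices (q + 1) * (2 * c * (5 * (q + 2) + 4)) ≤ (q + 1) * t by nlinarith
    nlinarith
  obtain ⟨l, rfl⟩ := Nat.exists_eq_add_of_le (show 2 * c * (q + 2) + t ≤ n by nlinarith)
  obtain ⟨G, hG, hcard⟩ := exists_isRainbowSat_pathGraph_two_mul_add_four (s := q + 2)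
    (m := 2 * c) (t := t) (l := l) (by omega) (by omega) hrim (by nlinarith)
  refine ⟨G, hG, ?_⟩
  rw [show q + 2 - 1 = q + 1 by omega] at hcard
  have hmul : (q + 1) * (4 * P + 2 * w) = (q + 1) * (c * q + t) := by rw [ht]
  nlinarith

theorem exists_isRainbowSat_pathGraph_eight {n : ℕ} (hn : 112 ≤ n) :
    ∃ G : SimpleGraph (Fin n), IsRainbowSat G (pathGraph 8) ∧ G.edgeSet.ncard = n + 24 := by
  obtain ⟨l, rfl⟩ := Nat.exists_eq_add_of_le (show 1 * 2 + 25 ≤ n by omega)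
  obtain ⟨G, hG, hcard⟩ := exists_isRainbowSat_pathGraph_two_mul_add_four (s := 2) (m := 1)
    (t := 25) (l := l) (by norm_num) (by norm_num) (by norm_num) (by omega)
  exact ⟨G, hG, by omega⟩

/-! ### Paths on six vertices -/

/-- The complete graph on `κ` with a leaf `l : Λ` hanging from each vertex `par l`. -/
def leafyClique {κ Λ : Type} (par : Λ → κ) : SimpleGraph (κ ⊕ Λ) :=
  attachVertices ⊤ fun l => {par l}

namespace leafyClique

variable {κ Λ : Type} {par : Λ → κ} {a b : κ} {l l' : Λ}

@[simp] theorem adj_inl_inl : (leafyClique par).Adj (.inl a) (.inl b) ↔ a ≠ b := by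
  simp [leafyClique]

@[simp] theorem adj_inl_inr : (leafyClique par).Adj (.inl a) (.inr l) ↔ a = par l := by
  simp [leafyClique]

@[simp] theorem adj_inr_inl : (leafyClique par).Adj (.inr l) (.inl a) ↔ a = par l := by
  simp [leafyClique]

@[simp] theorem not_adj_inr_inr : ¬ (leafyClique par).Adj (.inr l) (.inr l') := by
  simp [leafyClique]

theorem ncard_edgeSet [Fintype κ] [Fintype Λ] :
    (leafyClique par).edgeSet.ncard = (Fintype.card κ).choose 2 + Fintype.card Λ := by
  classical
  rw [leafyClique, ncard_edgeSet_attachVertices, ← coe_edgeFinset, Set.ncard_coe_finset,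
    card_edgeFinset_top_eq_card_choose_two]
  simp

theorem exists_eq_inl_of_adj_of_adj {v w w' : κ ⊕ Λ} (h : (leafyClique par).Adj v w)
    (h' : (leafyClique par).Adj v w') (hne : w ≠ w') : ∃ a, v = .inl a := by
  rcases v with a | l
  · exact ⟨a, rfl⟩
  · rcases w with w | w <;> rcases w' with w' | w' <;> simp_all

end leafyClique

/-- The edge coloring with colors `g u ^^^ g v`. -/
def xorColoring {V : Type} (g : V → ℕ) : Sym2 V → ℕ :=
  Sym2.lift ⟨fun u v => g u ^^^ g v, fun _ _ => Nat.xor_comm ..⟩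

theorem isProperEdgeColoring_xorColoring {V : Type} {G : SimpleGraph V} {g : V → ℕ}
    (hg : Function.Injective g) : IsProperEdgeColoring G (xorColoring g) := by
  rintro _ - _ - hne ⟨v, ⟨x, rfl⟩, ⟨y, rfl⟩⟩ h
  exact hne (congrArg (s(v, ·)) (hg (Nat.xor_right_injective h)))

theorem xor_eq_xor_of_nodup :
    ∀ {a b x y : Fin 4}, [a, b, x, y].Nodup → (a : ℕ) ^^^ b = x ^^^ y := by
  decide

namespace leafyClique

/-- In the coloring of `K₄` by `a ^^^ b`, opposite edges have the same color, whereas the four inner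
vertices of a path with five edges all lie in the clique. -/
theorem exists_not_hasRainbowCopy_pathGraph_six {n : ℕ} (par : Fin n → Fin 4) :
    ∃ c : Sym2 (Fin 4 ⊕ Fin n) → ℕ, IsProperEdgeColoring (leafyClique par) c ∧
      ¬ HasRainbowCopy (leafyClique par) (pathGraph 6) c := by
  refine ⟨xorColoring fun v => finSumFinEquiv v,
    isProperEdgeColoring_xorColoring (Fin.val_injective.comp finSumFinEquiv.injective), ?_⟩
  rintro ⟨f, hf, hadj, hcol⟩
  have hinl (i : Fin 4) : ∃ a, f i.castSucc.succ = .inl a :=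
    exists_eq_inl_of_adj_of_adj (hadj _ i.castSucc.castSucc (by simp [pathGraph_adj]))
      (hadj _ i.succ.succ (by simp [pathGraph_adj])) (hf.ne (by simp [Fin.ext_iff, add_assoc]))
  choose a ha using hinl
  have hainj : Function.Injective a := fun i j hij => by
    have := hf ((ha i).trans ((congrArg _ hij).trans (ha j).symm))
    simpa using this
  refine hcol s(1, 2) (pathGraph_adj.2 (by simp)) s(3, 4) (pathGraph_adj.2 (by simp)) (by decide) ?_
  simpa [xorColoring, show f 1 = .inl (a 0) from ha 0, show f 2 = .inl (a 1) from ha 1,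
    show f 3 = .inl (a 2) from ha 2, show f 4 = .inl (a 3) from ha 3]
    using xor_eq_xor_of_nodup (List.nodup_ofFn.2 hainj)

variable {κ Λ : Type} {par : Λ → κ} {G : SimpleGraph (κ ⊕ Λ)}
  {c : Sym2 (κ ⊕ Λ) → ℕ}

theorem exists_clique_color_notMem [Fintype κ] (hG : leafyClique par ≤ G)
    (hc : IsProperEdgeColoring G c) {a : κ} {S : Finset κ} (ha : a ∈ S) {U : Finset ℕ}
    (hU : S.card + U.card < Fintype.card κ) :
    ∃ b ∉ S, c s(.inl a, .inl b) ∉ U := by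
  classical
  obtain ⟨_, hb, hbU⟩ := hc.exists_color_notMem (a := .inl a) (C := Sᶜ.map .inl) (U := U)
    (fun b hb => by
      obtain ⟨b, hb', rfl⟩ := Finset.mem_map.1 hb
      exact hG (adj_inl_inl.2 fun h => Finset.mem_compl.1 hb' (h ▸ ha)))
    (by rw [Finset.card_map, Finset.card_compl]; omega)
  obtain ⟨b, hb', rfl⟩ := Finset.mem_map.1 hb
  exact ⟨b, Finset.mem_compl.1 hb', hbU⟩

/-- If the color `γ` occurs on a clique edge at `u`, then `w` is the other end of that edge;
otherwise any clique edge that avoids `u` and has a color other than `γ` and `δ` will do. -/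
theorem exists_detour [Fintype κ] (hG : leafyClique par ≤ G) (hc : IsProperEdgeColoring G c)
    (hκ : 4 ≤ Fintype.card κ) (u : κ) (γ δ : ℕ) :
    ∃ v w, v ≠ u ∧ w ≠ u ∧ v ≠ w ∧ c s(.inl u, .inl v) ≠ γ ∧ c s(.inl v, .inl w) ≠ γ ∧
      c s(.inl v, .inl w) ≠ δ := by
  classical
  have hcol {a b b' : κ} (hab : a ≠ b) (hab' : a ≠ b') (hbb' : b ≠ b') :
      c s(.inl a, .inl b) ≠ c s(.inl a, .inl b') :=
    hc.ne (hG (adj_inl_inl.2 hab)) (hG (adj_inl_inl.2 hab')) (by simpa)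
  have hswap (a b : κ) : c s(.inl a, .inl b) = c s(.inl b, .inl a) := by rw [Sym2.eq_swap]
  by_cases! h : ∃ z ≠ u, c s(.inl u, .inl z) = γ
  · obtain ⟨z, hz, rfl⟩ := h
    obtain ⟨v, hv, hvz⟩ := exists_clique_color_notMem hG hc (a := z) (S := {u, z}) (U := {δ})
      (by simp) (by simp [Finset.card_pair hz.symm]; omega)
    simp only [Finset.mem_insert, Finset.mem_singleton, not_or] at hv hvz
    refine ⟨v, z, hv.1, hz, hv.2, hcol (Ne.symm hv.1) hz.symm hv.2, ?_, by rwa [hswap]⟩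
    rw [hswap v, hswap u]
    exact hcol (Ne.symm hv.2) hz hv.1
  · obtain ⟨v, hv, -⟩ := exists_clique_color_notMem hG hc (a := u) (S := {u}) (U := ∅) (by simp)
      (by simp; omega)
    rw [Finset.mem_singleton] at hv
    obtain ⟨w, hw, hvw⟩ := exists_clique_color_notMem hG hc (a := v) (S := {u, v}) (U := {γ})
      (by simp) (by simp [Finset.card_pair (Ne.symm hv)]; omega)
    simp only [Finset.mem_insert, Finset.mem_singleton, not_or] at hw hvw
    by_cases hδ : c s(.inl v, .inl w) = δ
    · obtain ⟨x, hx, -⟩ := exists_clique_color_notMem hG hc (a := w) (S := {u, v, w}) (U := ∅)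
        (by simp) (by have := Finset.card_le_three (a := u) (b := v) (c := w); simp; omega)
      simp only [Finset.mem_insert, Finset.mem_singleton, not_or] at hx
      have hwv := hcol (a := v) (b := w) (b' := x) (by grind) (by grind) (by grind)
      have hvx := hcol (a := w) (b := v) (b' := x) (by grind) (by grind) (by grind)
      have hxv := hcol (a := x) (b := v) (b' := w) (by grind) (by grind) (by grind)
      by_cases hγ : c s(.inl w, .inl x) = γ
      · exact ⟨v, x, hv, hx.1, by grind, h v hv, by grind, by grind⟩
      · exact ⟨w, x, hw.1, hx.1, by grind, h w hw.1, hγ, by grind⟩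
    · exact ⟨v, w, hv, hw.1, by grind, h v hv, hvw, hδ⟩

variable [Finite Λ]

theorem adj_of_mem_leafFinset (hG : leafyClique par ≤ G) {a : κ} {x : κ ⊕ Λ}
    (hx : x ∈ leafFinset par a) : G.Adj x (.inl a) := by
  obtain ⟨l, rfl, rfl⟩ := mem_leafFinset.1 hx
  exact hG (by simp)

variable [Fintype κ]

theorem hasRainbowCopy_of_adj_leaf_clique (hG : leafyClique par ≤ G)
    (hc : IsProperEdgeColoring G c) (hκ : 4 ≤ Fintype.card κ)
    (hpar : ∀ a, 4 ≤ (par ⁻¹' {a}).ncard) {l : Λ} {v : κ} (hlv : G.Adj (.inr l) (.inl v))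
    (hne : par l ≠ v) : HasRainbowCopy G (pathGraph 6) c := by
  classical
  have hul : G.Adj (.inl (par l)) (.inr l) := hG (by simp)
  obtain ⟨w, hw, hcol⟩ := exists_clique_color_notMem hG hc (a := v) (S := {par l, v})
    (U := {c s(.inl (par l), .inr l)}) (by simp) (by simp [Finset.card_pair hne]; omega)
  simp only [Finset.mem_insert, Finset.mem_singleton, not_or] at hw hcol
  have hvw : G.Adj (.inl v) (.inl w) := hG (adj_inl_inl.2 (Ne.symm hw.2))
  have hp := (IsRainbowPath.cons_cons_nil hc hlv hvw (by simp)).cons hc hul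
    (by simp [hne, Ne.symm hw.1]) (by simpa using Ne.symm hcol)
  refine hp.hasRainbowCopy_length_add_three hc (C := (leafFinset par (par l)).erase (.inr l))
    (C' := leafFinset par w) (fun x hx => ?_) (fun x hx => ⟨adj_of_mem_leafFinset hG hx, ?_⟩)
    ?_ ?_ ?_
  · obtain ⟨l', hl', hpar', rfl⟩ := mem_leafFinset_erase.1 hx
    exact ⟨hG (by simp [hpar']), by simp [hl']⟩
  · obtain ⟨l', rfl, rfl⟩ := mem_leafFinset.1 hx
    have : l' ≠ l := by grind
    simp [this]
  · rw [Finset.disjoint_left]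
    grind [mem_leafFinset]
  · have := (hpar (par l)).trans_eq (card_leafFinset_erase_add_one (W := κ) l).symm
    exact Nat.le_of_succ_le_succ this
  · exact (hpar w).trans_eq card_leafFinset.symm

theorem hasRainbowCopy_of_adj_leaf_leaf_of_par_ne (hG : leafyClique par ≤ G)
    (hc : IsProperEdgeColoring G c) (hκ : 4 ≤ Fintype.card κ)
    (hpar : ∀ a, 4 ≤ (par ⁻¹' {a}).ncard) {l y : Λ} (hly : G.Adj (.inr l) (.inr y))
    (hne : par l ≠ par y) (hcol : c s(.inl (par l), .inr l) ≠ c s(.inl (par y), .inr y)) :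
    HasRainbowCopy G (pathGraph 6) c := by
  classical
  have hul : G.Adj (.inl (par l)) (.inr l) := hG (by simp)
  have hyu : G.Adj (.inr y) (.inl (par y)) := hG (by simp)
  have hp := (IsRainbowPath.cons_cons_nil hc hly hyu (by simp)).cons hc hul (by simp [hne])
    (by simpa [Sym2.eq_swap (a := Sum.inr y)] using hcol)
  obtain ⟨w, hw, -⟩ := exists_clique_color_notMem hG hc (a := par l) (S := {par l, par y})
    (U := ∅) (by simp) (by simp [Finset.card_pair hne]; omega)
  simp only [Finset.mem_insert, Finset.mem_singleton, not_or] at hw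
  have hwmem : .inl w ∉ (leafFinset par (par y)).erase (.inr y) := by simp
  refine hp.hasRainbowCopy_length_add_three hc (C := (leafFinset par (par l)).erase (.inr l))
    (C' := insert (.inl w) ((leafFinset par (par y)).erase (.inr y))) (fun x hx => ?_)
    (fun x hx => ?_) ?_ ?_ ?_
  · obtain ⟨l', hl', hpar', rfl⟩ := mem_leafFinset_erase.1 hx
    have : l' ≠ y := by grind
    exact ⟨hG (by simp [hpar']), by simp [hl', this]⟩
  · obtain rfl | hx := Finset.mem_insert.1 hx
    · exact ⟨hG (adj_inl_inl.2 hw.2), by simp [hw]⟩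
    obtain ⟨y', hy', hpar', rfl⟩ := mem_leafFinset_erase.1 hx
    have : y' ≠ l := by grind
    exact ⟨hG (by simp [hpar']), by simp [hy', this]⟩
  · rw [Finset.disjoint_left]
    grind [mem_leafFinset]
  · have := (hpar (par l)).trans_eq (card_leafFinset_erase_add_one (W := κ) l).symm
    exact Nat.le_of_succ_le_succ this
  · rw [Finset.card_insert_of_notMem hwmem, card_leafFinset_erase_add_one]
    exact hpar (par y)

theorem hasRainbowCopy_of_adj_leaf_leaf_of_par_eq_or (hG : leafyClique par ≤ G)
    (hc : IsProperEdgeColoring G c) (hκ : 4 ≤ Fintype.card κ)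
    (hpar : ∀ a, 4 ≤ (par ⁻¹' {a}).ncard) {l y : Λ} (hly : G.Adj (.inr l) (.inr y))
    (h : par l = par y ∨ c s(.inl (par l), .inr l) = c s(.inl (par y), .inr y)) :
    HasRainbowCopy G (pathGraph 6) c := by
  classical
  have hul : G.Adj (.inl (par l)) (.inr l) := hG (by simp)
  obtain ⟨v, w, hv, hw, hvw, huv, hvw', hvw''⟩ := exists_detour hG hc hκ (par l)
    (c s(.inr l, .inr y)) (c s(.inl (par l), .inr l))
  have hvu : G.Adj (.inl v) (.inl (par l)) := hG (adj_inl_inl.2 hv)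
  have hwv : G.Adj (.inl w) (.inl v) := hG (adj_inl_inl.2 hvw.symm)
  have hp := ((IsRainbowPath.cons_cons_nil hc hul hly (by simp)).cons hc hvu (by simp [hv])
    (by rw [Sym2.eq_swap]; simpa using huv)).cons hc hwv (by simp [hvw.symm, hw])
    (by rw [Sym2.eq_swap]; simpa using ⟨hvw'', hvw'⟩)
  obtain ⟨x, hx, hcol⟩ := hc.exists_color_notMem
    (fun x hx => (adj_of_mem_leafFinset (a := w) hG hx).symm)
    (U := {c s(.inl v, .inl (par l)), c s(.inl (par l), .inr l), c s(.inr l, .inr y)})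
    (Finset.card_le_three.trans_lt (by rw [card_leafFinset]; exact hpar w))
  have hxw := adj_of_mem_leafFinset hG hx
  obtain ⟨x, rfl, rfl⟩ := mem_leafFinset.1 hx
  have hxl : x ≠ l := by grind
  have hxy : x ≠ y := by
    rintro rfl
    simp [h.resolve_left hw.symm] at hcol
  have hq := hp.cons hc hxw (by simp [hxl, hxy]) (by rw [Sym2.eq_swap]; simpa using hcol)
  exact hq.hasRainbowCopy rfl

theorem isRainbowSat_pathGraph_six {n : ℕ} {par : Fin n → Fin 4}
    (hpar : ∀ a, 4 ≤ (par ⁻¹' {a}).ncard) : IsRainbowSat (leafyClique par) (pathGraph 6) := by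
  refine isRainbowSat_of_forall_le (exists_not_hasRainbowCopy_pathGraph_six par) ?_
  rintro G c hG hc (u | l) (v | y) huv hn
  · exact absurd (by simpa using huv.ne) hn
  · exact hasRainbowCopy_of_adj_leaf_clique hG hc (by simp) hpar huv.symm
      (by simpa [eq_comm] using hn)
  · exact hasRainbowCopy_of_adj_leaf_clique hG hc (by simp) hpar huv
      (by simpa [eq_comm] using hn)
  · by_cases! h : par l = par y ∨ c s(.inl (par l), .inr l) = c s(.inl (par y), .inr y)
    · exact hasRainbowCopy_of_adj_leaf_leaf_of_par_eq_or hG hc (by simp) hpar huv h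
    · exact hasRainbowCopy_of_adj_leaf_leaf_of_par_ne hG hc (by simp) hpar huv h.1 h.2

end leafyClique

theorem exists_isRainbowSat_pathGraph_six {n : ℕ} (hn : 20 ≤ n) :
    ∃ G : SimpleGraph (Fin n), IsRainbowSat G (pathGraph 6) ∧ G.edgeSet.ncard = n + 2 := by
  obtain ⟨par, hpar⟩ := exists_forall_le_ncard_preimage (α := Fin (n - 4)) (β := Fin 4)
    (μ := fun _ => 4) (by simp; omega)
  obtain ⟨G, hG, hcard⟩ := (leafyClique.isRainbowSat_pathGraph_six hpar).exists_fin (n := n)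
    (by simp; omega)
  refine ⟨G, hG, ?_⟩
  rw [hcard, leafyClique.ncard_edgeSet, Fintype.card_fin, Fintype.card_fin,
    show Nat.choose 4 2 = 6 from rfl]
  omega

/-- For `k ≥ 6` and `n ≥ (k-1)·2^(k-4)` there is an `n`-vertex rainbow
`P_k`-saturated graph with exactly `n + (k-5)·2^(k-5)` edges; in particular the rainbow
saturation number of `P_k` is at most `n + (k-5)·2^(k-5)`. -/
theorem stmt_18 (k n : ℕ) (hk : 6 ≤ k) (hn : (k - 1) * 2 ^ (k - 4) ≤ n) :
    ∃ G : SimpleGraph (Fin n),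
      IsRainbowSat G (SimpleGraph.pathGraph k) ∧
      G.edgeSet.ncard = n + (k - 5) * 2 ^ (k - 5) := by
  obtain ⟨r, rfl | rfl⟩ : ∃ r, k = 2 * r + 5 ∨ k = 2 * r + 6 := ⟨(k - 5) / 2, by omega⟩
  · rw [show 2 * r + 5 - 1 = 2 * r + 4 by omega, show 2 * r + 5 - 4 = 2 * r + 1 by omega,
      pow_succ', pow_mul] at hn
    rw [show 2 * r + 5 - 5 = 2 * r by omega, pow_mul]
    exact exists_isRainbowSat_pathGraph_two_mul_add_five (by omega) hn
  · obtain rfl | rfl | hr : r = 0 ∨ r = 1 ∨ 2 ≤ r := by omega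
    · exact exists_isRainbowSat_pathGraph_six hn
    · exact exists_isRainbowSat_pathGraph_eight hn
    · rw [show 2 * r + 6 - 1 = 2 * r + 5 by omega, show 2 * r + 6 - 4 = 2 * r + 2 by omega,
        pow_add, pow_mul, mul_comm (_ ^ r)] at hn
      rw [show 2 * r + 6 - 5 = 2 * r + 1 by omega, pow_succ', pow_mul]
      exact exists_isRainbowSat_pathGraph_two_mul_add_six hr hn
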